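/- arXiv:1412.6364 — 2 statements merged into one kernel-verified Lean document; each statement's English description precedes it below -/
import Mathlib

section
/- Let λ be an even partition of length r (so that H_λ has no real zeros and W_λ(x) = e^{−x²}/H_λ(x)² is a well-defined weight function on ℝ). Then for all n, m ∈ N_λ with n ≠ m, ∫_{−∞}^{∞} P_n(x) P_m(x) e^{−x²}/H_λ(x)² dx = 0. -/
open Polynomial

/-- The physicists' Hermite polynomials: `H 0 = 1`, `H (n+1) = 2X * H n - (H n)'`. -/
noncomputable def physHermite : ℕ → Polynomial ℝ
  | 0 => 1
  | n + 1 => 2 * X * physHermite n - derivative (physHermite n)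

/-- Wronskian determinant of a finite family of polynomials. -/
noncomputable def Wron {m : ℕ} (f : Fin m → Polynomial ℝ) : Polynomial ℝ :=
  Matrix.det (Matrix.of fun i j : Fin m => (fun p => derivative p)^[(i : ℕ)] (f j))

/-- `lam : Fin r → ℕ` is a partition: weakly decreasing with positive parts. -/
def IsPartition (r : ℕ) (lam : Fin r → ℕ) : Prop :=
  (∀ i j : Fin r, i ≤ j → lam j ≤ lam i) ∧ ∀ i, 1 ≤ lam i

/-- An even (double) partition: `r` even and `λ_{2k-1} = λ_{2k}`. -/
def IsEvenPartition (r : ℕ) (lam : Fin r → ℕ) : Prop :=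
  IsPartition r lam ∧ Even r ∧
    ∀ k : ℕ, ∀ h : 2 * k + 1 < r, lam ⟨2 * k, by omega⟩ = lam ⟨2 * k + 1, h⟩

/-- The generalized Hermite polynomial `H_λ = Wr[H_{λ_r}, H_{λ_{r-1}+1}, …, H_{λ_1+r-1}]`. -/
noncomputable def genHermite (r : ℕ) (lam : Fin r → ℕ) : Polynomial ℝ :=
  Wron fun j : Fin r => physHermite (lam (Fin.rev j) + j)

/-- The exceptional Hermite polynomial
`P_n = Wr[H_{λ_r}, H_{λ_{r-1}+1}, …, H_{λ_1+r-1}, H_{n-|λ|+r}]`. -/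
noncomputable def XHermite (r : ℕ) (lam : Fin r → ℕ) (n : ℕ) : Polynomial ℝ :=
  Wron fun j : Fin (r + 1) =>
    if h : (j : ℕ) < r then physHermite (lam (Fin.rev ⟨(j : ℕ), h⟩) + j)
    else physHermite (n + r - ∑ i, lam i)

/-- The degree sequence `N_λ`: `n ≥ |λ| - r` and `n ≠ |λ| + λ_j - j` for `j = 1, …, r`. -/
def XDegSeq (r : ℕ) (lam : Fin r → ℕ) (n : ℕ) : Prop :=
  (∑ i, lam i) ≤ n + r ∧ ∀ i : Fin r, n ≠ (∑ i, lam i) + lam i - ((i : ℕ) + 1)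

/-! The Wronskian operator `g ↦ Wr[f_1, …, f_r, g]` annihilates each `f_j`, so it is a right divisor
of every operator annihilating them. If the `f_j` are eigenfunctions of a second order operator,
dividing yields Crum's theorem: the Wronskians of further eigenfunctions satisfy a transformed
second order equation with the same eigenvalues. For Hermite polynomials, Lagrange's identity then
exhibits `2 (m - n) P_n P_m e^{-x²} / H_λ²` as the derivative of `Wr[P_m, P_n] e^{-x²} / H_λ²`, so
its integral vanishes as soon as `H_λ` has no real zeros.

If `H_λ` vanished at `a`, some nontrivial combination `f` of its `r` Hermite polynomials `H_k` would
have a zero of order `r` at `a` and be annihilated by `∏ (N - k)`, where `N` is the number operator.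
Moving half of the factors by integration by parts expands `0 = ⟨f 1_{x > a}, ∏ (N - k) f⟩` in the
Hermite basis, with terms proportional to `∏ (n - k) ⟨H_n, f 1_{x > a}⟩²`. For an even partition the
degrees `k` form pairs of consecutive integers, so the product is nonnegative; hence all but
finitely many Hermite coefficients of `f 1_{x > a}` vanish, so this function is almost everywhere a
polynomial, which must vanish because it does on `x < a`; thus `f = 0`. -/

section DifferentialOperators

variable {k A : Type*} [CommRing k] [CommRing A] [Algebra k A] (D : Derivation k A A)

/-- The `A`-module of linear differential operators of order less than `n` over the differential
algebra `(A, D)`, namely the left `A`-span of `1, D, …, D ^ (n - 1)` in `Module.End k A`. -/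
def diffOpLT (n : ℕ) : Submodule A (Module.End k A) :=
  Submodule.span A (Set.range fun i : Fin n => (D : Module.End k A) ^ (i : ℕ))

/-- The matrix of iterated derivatives of a family, whose determinant is its Wronskian. -/
def wronskianMatrix {n : ℕ} (f : Fin n → A) : Matrix (Fin n) (Fin n) A :=
  Matrix.of fun i j => ((D : Module.End k A) ^ (i : ℕ)) (f j)

attribute [local instance] LieRing.ofAssociativeRing

variable {D} {n : ℕ}

theorem pow_mem_diffOpLT {i : ℕ} (hi : i < n) : (D : Module.End k A) ^ i ∈ diffOpLT D n :=
  Submodule.subset_span ⟨⟨i, hi⟩, rfl⟩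

theorem diffOpLT_mono {m : ℕ} (hmn : m ≤ n) : diffOpLT D m ≤ diffOpLT D n := by
  rw [diffOpLT, Submodule.span_le]
  rintro _ ⟨i, rfl⟩
  exact pow_mem_diffOpLT (i.2.trans_le hmn)

theorem mul_mem_diffOpLT_succ {T : Module.End k A} (hT : T ∈ diffOpLT D n) :
    T * (D : Module.End k A) ∈ diffOpLT D (n + 1) := by
  induction hT using Submodule.span_induction with
  | mem T hT =>
    obtain ⟨i, rfl⟩ := hT
    exact pow_succ (D : Module.End k A) i ▸ pow_mem_diffOpLT (Nat.succ_lt_succ i.2)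
  | zero => simp only [zero_mul, Submodule.zero_mem]
  | add S T _ _ hS hT => exact add_mul S T _ ▸ Submodule.add_mem _ hS hT
  | smul a T _ hT => exact Submodule.smul_mem _ a hT

theorem lie_mem_diffOpLT {T : Module.End k A} (hT : T ∈ diffOpLT D n) :
    ⁅(D : Module.End k A), T⁆ ∈ diffOpLT D n := by
  induction hT using Submodule.span_induction with
  | mem T hT =>
    obtain ⟨i, rfl⟩ := hT
    rw [(Commute.self_pow (D : Module.End k A) i).lie_eq]
    exact Submodule.zero_mem _
  | zero => simp only [Ring.lie_def, mul_zero, zero_mul, sub_zero, Submodule.zero_mem]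
  | add S T _ _ hS hT => exact lie_add (D : Module.End k A) S T ▸ Submodule.add_mem _ hS hT
  | smul a T hT hDT =>
    have leibniz : ⁅(D : Module.End k A), a • T⁆ = a • ⁅(D : Module.End k A), T⁆ + D a • T := by
      ext g
      simp only [Ring.lie_def, LinearMap.sub_apply, Module.End.mul_apply, LinearMap.smul_apply,
        smul_eq_mul, Derivation.coeFn_coe, Derivation.leibniz, LinearMap.add_apply]
      ring
    exact leibniz ▸ Submodule.add_mem _ (Submodule.smul_mem _ a hDT) (Submodule.smul_mem _ _ hT)

theorem derivation_mul_mem_diffOpLT_succ {T : Module.End k A} (hT : T ∈ diffOpLT D n) :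
    (D : Module.End k A) * T ∈ diffOpLT D (n + 1) := by
  have hsplit : (D : Module.End k A) * T = ⁅(D : Module.End k A), T⁆ + T * D := by
    rw [Ring.lie_def, sub_add_cancel]
  exact hsplit ▸ Submodule.add_mem _ (diffOpLT_mono n.le_succ (lie_mem_diffOpLT hT))
    (mul_mem_diffOpLT_succ hT)

theorem pow_lie_mulLeft_mem_diffOpLT (a : A) (i : ℕ) :
    ⁅(D : Module.End k A) ^ i, LinearMap.mulLeft k a⁆ ∈ diffOpLT D i := by
  induction i with
  | zero =>
    rw [pow_zero, (Commute.one_left _).lie_eq]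
    exact Submodule.zero_mem _
  | succ i ih =>
    have hstep : ⁅(D : Module.End k A) ^ (i + 1), LinearMap.mulLeft k a⁆ =
        (D : Module.End k A) * ⁅(D : Module.End k A) ^ i, LinearMap.mulLeft k a⁆ +
          D a • (D : Module.End k A) ^ i := by
      ext g
      simp only [pow_succ', Ring.lie_def, LinearMap.sub_apply, Module.End.mul_apply,
        LinearMap.mulLeft_apply, Derivation.coeFn_coe, LinearMap.add_apply, map_sub,
        Derivation.leibniz, smul_eq_mul, LinearMap.smul_apply]
      ring
    exact hstep ▸ Submodule.add_mem _ (derivation_mul_mem_diffOpLT_succ ih)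
      (Submodule.smul_mem _ _ (pow_mem_diffOpLT i.lt_succ_self))

theorem lie_mulLeft_mem_diffOpLT {T : Module.End k A} (a : A) (hT : T ∈ diffOpLT D (n + 1)) :
    ⁅T, LinearMap.mulLeft k a⁆ ∈ diffOpLT D n := by
  induction hT using Submodule.span_induction with
  | mem T hT =>
    obtain ⟨i, rfl⟩ := hT
    exact diffOpLT_mono (Nat.lt_succ_iff.mp i.2) (pow_lie_mulLeft_mem_diffOpLT a i)
  | zero => simp only [Ring.lie_def, mul_zero, zero_mul, sub_zero, Submodule.zero_mem]
  | add S T _ _ hS hT => exact add_lie S T (LinearMap.mulLeft k a) ▸ Submodule.add_mem _ hS hT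
  | smul b T _ hT =>
    have hlin : ⁅b • T, LinearMap.mulLeft k a⁆ = b • ⁅T, LinearMap.mulLeft k a⁆ := by
      ext g
      simp only [Ring.lie_def, LinearMap.sub_apply, Module.End.mul_apply,
        LinearMap.mulLeft_apply, LinearMap.smul_apply, smul_eq_mul]
      ring
    exact hlin ▸ Submodule.smul_mem _ b hT

theorem eq_zero_of_mem_diffOpLT_of_det_ne_zero [IsDomain A] {T : Module.End k A}
    (hT : T ∈ diffOpLT D n) {f : Fin n → A}
    (hf : (wronskianMatrix D f).det ≠ 0) (hTf : ∀ j, T (f j) = 0) : T = 0 := by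
  obtain ⟨c, rfl⟩ := (Submodule.mem_span_range_iff_exists_fun A).mp hT
  have hc : c = 0 := Matrix.eq_zero_of_vecMul_eq_zero hf <| by
    ext j
    simpa [wronskianMatrix, Matrix.vecMul, dotProduct, LinearMap.sum_apply] using hTf j
  simp only [hc, Pi.zero_apply, zero_smul, Finset.sum_const_zero]

theorem exists_sub_smul_pow_mem_diffOpLT {T : Module.End k A} (hT : T ∈ diffOpLT D (n + 1)) :
    ∃ a : A, T - a • (D : Module.End k A) ^ n ∈ diffOpLT D n := by
  obtain ⟨c, rfl⟩ := (Submodule.mem_span_range_iff_exists_fun A).mp hT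
  refine ⟨c (Fin.last n), ?_⟩
  rw [Fin.sum_univ_castSucc, Fin.val_last, add_sub_cancel_right]
  exact Submodule.sum_mem _ fun i _ => Submodule.smul_mem _ _ (pow_mem_diffOpLT i.2)

end DifferentialOperators

section Crum

variable {k A : Type*} [CommRing k] [CommRing A] [Algebra k A] (D : Derivation k A A) {r : ℕ}

attribute [local instance] LieRing.ofAssociativeRing

/-- The operator `g ↦ Wr[f_1, …, f_r, g]` (`crumOp_apply`), given by the Laplace expansion along
the last column; it is the numerator of the iterated Darboux transformation with seed functions
`f_1, …, f_r`. -/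
def crumOp (f : Fin r → A) : Module.End k A :=
  ∑ i : Fin (r + 1), ((-1) ^ ((i : ℕ) + r) *
    (Matrix.of fun l j : Fin r => ((D : Module.End k A) ^ (i.succAbove l : ℕ)) (f j)).det) •
      (D : Module.End k A) ^ (i : ℕ)

variable {D} {f : Fin r → A}

theorem crumOp_apply (g : A) :
    crumOp D f g = (wronskianMatrix D (Fin.snoc f g : Fin (r + 1) → A)).det := by
  rw [Matrix.det_succ_column _ (Fin.last r), crumOp, LinearMap.sum_apply]
  refine Finset.sum_congr rfl fun i _ => ?_
  have hminor : (wronskianMatrix D (Fin.snoc f g : Fin (r + 1) → A)).submatrix i.succAbove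
      (Fin.last r).succAbove =
      Matrix.of fun l j : Fin r => ((D : Module.End k A) ^ (i.succAbove l : ℕ)) (f j) := by
    ext l j
    simp [wronskianMatrix]
  rw [hminor, LinearMap.smul_apply, smul_eq_mul, wronskianMatrix, Matrix.of_apply,
    Fin.snoc_last, Fin.val_last]
  ring

theorem crumOp_apply_seed (j : Fin r) : crumOp D f (f j) = 0 := by
  rw [crumOp_apply]
  refine Matrix.det_zero_of_column_eq (Fin.castSucc_lt_last j).ne fun i => ?_
  simp only [wronskianMatrix, Matrix.of_apply, Fin.snoc_castSucc, Fin.snoc_last]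

theorem crumOp_sub_smul_pow_mem_diffOpLT :
    crumOp D f - (wronskianMatrix D f).det • (D : Module.End k A) ^ r ∈ diffOpLT D r := by
  have hlead : (Matrix.of fun l j : Fin r =>
      ((D : Module.End k A) ^ ((Fin.last r).succAbove l : ℕ)) (f j)) = wronskianMatrix D f := by
    ext l j
    simp only [wronskianMatrix, Fin.succAbove_last, Fin.val_castSucc, Matrix.of_apply]
  rw [crumOp, Fin.sum_univ_castSucc, hlead, Fin.val_last, ← two_mul, pow_mul, neg_one_sq, one_pow,
    one_mul, add_sub_cancel_right]
  exact Submodule.sum_mem _ fun i _ => Submodule.smul_mem _ _ (pow_mem_diffOpLT i.2)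

theorem crumOp_mem_diffOpLT : crumOp D f ∈ diffOpLT D (r + 1) :=
  Submodule.sum_mem _ fun i _ => Submodule.smul_mem _ _ (pow_mem_diffOpLT i.2)

theorem lie_crumOp_sub_smul_pow_mem_diffOpLT :
    ⁅(D : Module.End k A), crumOp D f⁆ -
      D (wronskianMatrix D f).det • (D : Module.End k A) ^ r ∈ diffOpLT D r := by
  have hsplit : ⁅(D : Module.End k A), crumOp D f⁆ -
      D (wronskianMatrix D f).det • (D : Module.End k A) ^ r =
        ⁅(D : Module.End k A),
          crumOp D f - (wronskianMatrix D f).det • (D : Module.End k A) ^ r⁆ := by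
    ext g
    have hcomm : ((D : Module.End k A) ^ r) (D g) = D (((D : Module.End k A) ^ r) g) :=
      LinearMap.congr_fun (pow_mul_comm' (D : Module.End k A) r) g
    simp only [Ring.lie_def, LinearMap.sub_apply, Module.End.mul_apply, LinearMap.smul_apply,
      smul_eq_mul, Derivation.coeFn_coe, Derivation.leibniz, map_sub, hcomm]
    ring
  exact hsplit ▸ lie_mem_diffOpLT crumOp_sub_smul_pow_mem_diffOpLT

/-- Orders `r + 2` and `r + 1` cancel: if `crumOp D f = H D ^ r + c D ^ (r - 1) + …`, the three
terms have coefficients `H ^ 2`, `0`, `H ^ 2` in order `r + 2` and `H (2 D H + c)`,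
`(2 D H + p H) H`, `H (c - p H)` in order `r + 1`. -/
theorem crumOp_intertwining_mem_diffOpLT (p q : A) :
    (wronskianMatrix D f).det • ((D : Module.End k A) * D * crumOp D f) -
      (2 * D (wronskianMatrix D f).det + p * (wronskianMatrix D f).det) •
        ((D : Module.End k A) * crumOp D f) -
      (wronskianMatrix D f).det • (crumOp D f * ((D : Module.End k A) * D -
        p • (D : Module.End k A) - LinearMap.mulLeft k q)) ∈ diffOpLT D (r + 1) := by
  set H := (wronskianMatrix D f).det
  set δ : Module.End k A := (D : Module.End k A)
  set T := crumOp D f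
  have hTδ : (T - H • δ ^ r) * δ ∈ diffOpLT D (r + 1) :=
    mul_mem_diffOpLT_succ crumOp_sub_smul_pow_mem_diffOpLT
  have hδTδ : (⁅δ, T⁆ - D H • δ ^ r) * δ ∈ diffOpLT D (r + 1) :=
    mul_mem_diffOpLT_succ lie_crumOp_sub_smul_pow_mem_diffOpLT
  have hδT : ⁅δ, T⁆ ∈ diffOpLT D (r + 1) := lie_mem_diffOpLT crumOp_mem_diffOpLT
  have hδδT : ⁅δ, ⁅δ, T⁆⁆ ∈ diffOpLT D (r + 1) := lie_mem_diffOpLT hδT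
  have hTp : ⁅T, LinearMap.mulLeft k p⁆ * δ ∈ diffOpLT D (r + 1) :=
    mul_mem_diffOpLT_succ (lie_mulLeft_mem_diffOpLT p crumOp_mem_diffOpLT)
  have hTq : ⁅T, LinearMap.mulLeft k q⁆ ∈ diffOpLT D (r + 1) :=
    diffOpLT_mono r.le_succ (lie_mulLeft_mem_diffOpLT q crumOp_mem_diffOpLT)
  have hsplit : H • (δ * δ * T) - (2 * D H + p * H) • (δ * T) -
      H • (T * (δ * δ - p • δ - LinearMap.mulLeft k q)) =
      H • ⁅δ, ⁅δ, T⁆⁆ + (2 * H) • ((⁅δ, T⁆ - D H • δ ^ r) * δ) -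
        (2 * D H + p * H) • ⁅δ, T⁆ - (2 * D H) • ((T - H • δ ^ r) * δ) +
        H • (⁅T, LinearMap.mulLeft k p⁆ * δ) +
        H • ⁅T, LinearMap.mulLeft k q⁆ + (H * q) • T := by
    ext g
    simp only [LinearMap.sub_apply, LinearMap.smul_apply, Module.End.mul_apply, smul_eq_mul,
      LinearMap.mulLeft_apply, map_sub, Ring.lie_def, LinearMap.add_apply]
    ring
  rw [hsplit]
  exact add_mem (add_mem (add_mem (sub_mem (sub_mem (add_mem
    (Submodule.smul_mem _ _ hδδT) (Submodule.smul_mem _ _ hδTδ)) (Submodule.smul_mem _ _ hδT))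
    (Submodule.smul_mem _ _ hTδ)) (Submodule.smul_mem _ _ hTp)) (Submodule.smul_mem _ _ hTq))
    (Submodule.smul_mem _ _ crumOp_mem_diffOpLT)

/-- Right division by `crumOp D f`. -/
theorem exists_det_smul_eq_smul_crumOp [IsDomain A] (hf : (wronskianMatrix D f).det ≠ 0)
    {T : Module.End k A} (hT : T ∈ diffOpLT D (r + 1)) (hTf : ∀ j, T (f j) = 0) :
    ∃ e : A, (wronskianMatrix D f).det • T = e • crumOp D f := by
  obtain ⟨e, he⟩ := exists_sub_smul_pow_mem_diffOpLT hT
  refine ⟨e, sub_eq_zero.mp (eq_zero_of_mem_diffOpLT_of_det_ne_zero ?_ hf fun j => ?_)⟩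
  · have hsplit : (wronskianMatrix D f).det • T - e • crumOp D f =
        (wronskianMatrix D f).det • (T - e • (D : Module.End k A) ^ r) -
          e • (crumOp D f - (wronskianMatrix D f).det • (D : Module.End k A) ^ r) := by
      simp only [smul_sub, smul_smul, mul_comm e]
      abel
    exact hsplit ▸ sub_mem (Submodule.smul_mem _ _ he)
      (Submodule.smul_mem _ _ crumOp_sub_smul_pow_mem_diffOpLT)
  · simp only [LinearMap.sub_apply, LinearMap.smul_apply, hTf, crumOp_apply_seed, smul_zero,
      sub_self]

/-- Crum's theorem with the denominators cleared; the zeroth coefficient `e` of the transformed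
operator need not be made explicit. -/
theorem exists_crumOp_intertwining [IsDomain A] (hf : (wronskianMatrix D f).det ≠ 0) {p q : A}
    {ν : Fin r → k} (hν : ∀ j, D (D (f j)) - p * D (f j) - q * f j = ν j • f j) :
    ∃ e : A, ∀ g, (wronskianMatrix D f).det *
      ((wronskianMatrix D f).det * D (D (crumOp D f g)) -
        (2 * D (wronskianMatrix D f).det + p * (wronskianMatrix D f).det) * D (crumOp D f g) -
        (wronskianMatrix D f).det * crumOp D f (D (D g) - p * D g - q * g)) =
      e * crumOp D f g := by
  obtain ⟨e, he⟩ := exists_det_smul_eq_smul_crumOp hf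
    (crumOp_intertwining_mem_diffOpLT (D := D) (f := f) p q) fun j => by
      simp only [LinearMap.sub_apply, LinearMap.smul_apply, Module.End.mul_apply,
        Derivation.coeFn_coe, LinearMap.mulLeft_apply, smul_eq_mul, hν, crumOp_apply_seed,
        map_zero, map_smul, mul_zero, smul_zero, sub_zero]
  exact ⟨e, fun g => LinearMap.congr_fun he g⟩

theorem crumOp_lagrange_identity [IsDomain A] (hf : (wronskianMatrix D f).det ≠ 0) {p q : A}
    {ν : Fin r → k} (hν : ∀ j, D (D (f j)) - p * D (f j) - q * f j = ν j • f j)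
    {g h : A} {μ κ : k} (hg : D (D g) - p * D g - q * g = μ • g)
    (hh : D (D h) - p * D h - q * h = κ • h) :
    (wronskianMatrix D f).det *
        D (D (crumOp D f g) * crumOp D f h - crumOp D f g * D (crumOp D f h)) -
      (2 * D (wronskianMatrix D f).det + p * (wronskianMatrix D f).det) *
        (D (crumOp D f g) * crumOp D f h - crumOp D f g * D (crumOp D f h)) =
      (μ - κ) • ((wronskianMatrix D f).det * (crumOp D f g * crumOp D f h)) := by
  obtain ⟨e, he⟩ := exists_crumOp_intertwining hf hν
  have hPg := he g
  have hPh := he h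
  rw [hg, map_smul] at hPg
  rw [hh, map_smul] at hPh
  refine mul_left_cancel₀ hf ?_
  simp only [Algebra.smul_def, map_sub, Derivation.leibniz] at hPg hPh ⊢
  linear_combination crumOp D f h * hPg - crumOp D f g * hPh

end Crum

section L2

open MeasureTheory

theorem hasSum_inner_mul_inner_div {ι E : Type*} [NormedAddCommGroup E] [InnerProductSpace ℝ E]
    [CompleteSpace E] {w : ι → E} (horth : Pairwise fun i j => inner ℝ (w i) (w j) = 0)
    (hne : ∀ i, w i ≠ 0) (hcomplete : ∀ x, (∀ i, inner ℝ (w i) x = 0) → x = 0) (x y : E) :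
    HasSum (fun i => inner ℝ (w i) x * inner ℝ (w i) y / inner ℝ (w i) (w i)) (inner ℝ x y) := by
  have hnorm (i) : ‖w i‖ ≠ 0 := norm_ne_zero_iff.mpr (hne i)
  have hon : Orthonormal ℝ fun i => ‖w i‖⁻¹ • w i := by
    refine ⟨fun i => ?_, fun i j hij => ?_⟩
    · simp only [norm_smul, norm_inv, norm_norm, inv_mul_cancel₀ (hnorm i)]
    · simp only [real_inner_smul_left, real_inner_smul_right, horth hij, mul_zero]
  have hspan : (Submodule.span ℝ (Set.range fun i => ‖w i‖⁻¹ • w i))ᗮ = ⊥ := by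
    refine (Submodule.eq_bot_iff _).mpr fun x hx => hcomplete x fun i => ?_
    have hi := (Submodule.mem_orthogonal _ _).mp hx _ (Submodule.subset_span ⟨i, rfl⟩)
    exact (mul_eq_zero.mp ((real_inner_smul_left _ _ _).symm.trans hi)).resolve_left
      (inv_ne_zero (hnorm i))
  have hsum := (HilbertBasis.mkOfOrthogonalEqBot hon hspan).hasSum_inner_mul_inner x y
  simp only [HilbertBasis.coe_mkOfOrthogonalEqBot, real_inner_smul_left, real_inner_smul_right,
    real_inner_comm (w _) x] at hsum
  convert! hsum using 2 with i
  rw [real_inner_self_eq_norm_sq]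
  field_simp

theorem inner_toLp_eq_integral_mul {α : Type*} [MeasurableSpace α] {μ : Measure α} {f g : α → ℝ}
    (hf : MemLp f 2 μ) (hg : MemLp g 2 μ) :
    inner ℝ (hf.toLp f) (hg.toLp g) = ∫ x, f x * g x ∂μ := by
  rw [L2.inner_def]
  refine integral_congr_ae ?_
  filter_upwards [hf.coeFn_toLp, hg.coeFn_toLp] with x hfx hgx
  rw [hfx, hgx, real_inner_comm]
  rfl

end L2

section MomentProblem

open MeasureTheory ProbabilityTheory

variable {μ : Measure ℝ} {g : ℝ → ℝ}

theorem integrable_polynomial_eval (hμ : integrableExpSet id μ = Set.univ) (p : ℝ[X]) :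
    Integrable (fun x => p.eval x) μ := by
  simp only [eval_eq_sum_range]
  exact integrable_finsetSum _ fun n _ =>
    (integrable_pow_of_mem_interior_integrableExpSet (X := id) (by simp [hμ]) n).const_mul _

theorem memLp_two_polynomial_eval (hμ : integrableExpSet id μ = Set.univ) (p : ℝ[X]) :
    MemLp (fun x => p.eval x) 2 μ := by
  refine (memLp_two_iff_integrable_sq (integrable_polynomial_eval hμ p).aestronglyMeasurable).mpr ?_
  simpa only [← eval_pow] using integrable_polynomial_eval hμ (p ^ 2)

theorem integral_cexp_mul_eq_zero (hμ : integrableExpSet id μ = Set.univ) (hg : MemLp g 2 μ)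
    (hmom : ∀ n : ℕ, ∫ x, x ^ n * g x ∂μ = 0) (t : ℝ) :
    ∫ x, Complex.exp (t * x * Complex.I) * g x ∂μ = 0 := by
  have hexp : Integrable (fun x => Real.exp |t * x| * |g x|) μ := by
    refine MemLp.integrable_mul (p := 2) (q := 2) ?_ hg.abs
    rw [memLp_two_iff_integrable_sq (by fun_prop)]
    have hmem (s : ℝ) : Integrable (fun x => Real.exp (s * x)) μ :=
      show s ∈ integrableExpSet id μ from hμ ▸ Set.mem_univ s
    refine (integrable_exp_abs_mul_abs (hmem (2 * t)) (hmem (-(2 * t)))).congr ?_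
    refine .of_forall fun x => ?_
    simp [← Real.exp_nat_mul, abs_mul, mul_assoc]
  have hbound (x : ℝ) : HasSum (fun n : ℕ => |t * x| ^ n / n.factorial * |g x|)
      (Real.exp |t * x| * |g x|) :=
    (Real.exp_eq_exp_ℝ ▸ NormedSpace.expSeries_div_hasSum_exp |t * x|).mul_right _
  have hsum : HasSum (fun n : ℕ => ∫ x, (t * x * Complex.I) ^ n / n.factorial * g x ∂μ)
      (∫ x, Complex.exp (t * x * Complex.I) * g x ∂μ) := by
    refine hasSum_integral_of_dominated_convergence
      (fun n x => |t * x| ^ n / n.factorial * |g x|) (fun n => ?_) (fun n => .of_forall fun x => ?_)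
      (.of_forall fun x => (hbound x).summable) ?_ (.of_forall fun x => ?_)
    · exact AEStronglyMeasurable.mul (by fun_prop)
        (Complex.continuous_ofReal.comp_aestronglyMeasurable hg.1)
    · simp only [Complex.norm_mul, Complex.norm_div, norm_pow, Complex.norm_real, Real.norm_eq_abs,
        Complex.norm_I, mul_one, RCLike.norm_natCast, abs_mul, le_refl]
    · simpa only [(hbound _).tsum_eq] using hexp
    · exact (Complex.exp_eq_exp_ℂ ▸ NormedSpace.expSeries_div_hasSum_exp _).mul_right _
  refine hsum.unique ?_
  have hfactor (n : ℕ) (x : ℝ) : ((t * x * Complex.I) ^ n / n.factorial * g x : ℂ) =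
      (t * Complex.I) ^ n / n.factorial * (x ^ n * g x : ℝ) := by
    push_cast
    ring
  simpa only [hfactor, integral_const_mul, integral_complex_ofReal, hmom, Complex.ofReal_zero,
    mul_zero] using hasSum_zero

variable [IsFiniteMeasure μ]

theorem ae_eq_zero_of_forall_integral_cexp_mul_eq_zero (hg : Integrable g μ)
    (h : ∀ t : ℝ, ∫ x, Complex.exp (t * x * Complex.I) * g x ∂μ = 0) : g =ᵐ[μ] 0 := by
  have hpos := isFiniteMeasure_withDensity_ofReal hg.2
  have hneg := isFiniteMeasure_withDensity_ofReal hg.neg.2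
  have hchar {F : ℝ → ℝ} (hF : Integrable F μ) (t : ℝ) :
      Integrable (fun x : ℝ => F x • Complex.exp (t * x * Complex.I)) μ := by
    refine hF.mono (hF.1.smul (by fun_prop)) (.of_forall fun x => le_of_eq ?_)
    rw [norm_smul, ← Complex.ofReal_mul, Complex.norm_exp_ofReal_mul_I, mul_one]
  have hcharFun : charFun (μ.withDensity fun x => ENNReal.ofReal (g x)) =
      charFun (μ.withDensity fun x => ENNReal.ofReal (-g x)) := by
    ext t
    rw [charFun_apply_real, charFun_apply_real,
      integral_withDensity_eq_integral_toReal_smul₀ (by fun_prop) (by simp),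
      integral_withDensity_eq_integral_toReal_smul₀ (by fun_prop) (by simp), ← sub_eq_zero, ← h t]
    simp only [ENNReal.toReal_ofReal']
    rw [← integral_sub (hchar hg.pos_part t) (hchar hg.neg_part t)]
    refine integral_congr_ae (.of_forall fun x => ?_)
    beta_reduce
    rw [← sub_smul, max_zero_sub_max_neg_zero_eq_self, Complex.real_smul, mul_comm]
  have hdens := Measure.ext_of_charFun hcharFun
  rw [withDensity_eq_iff_of_sigmaFinite (by fun_prop) (by fun_prop)] at hdens
  filter_upwards [hdens] with x hx
  rw [← max_zero_sub_max_neg_zero_eq_self (g x), ← ENNReal.toReal_ofReal',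
    ← ENNReal.toReal_ofReal', hx, sub_self, Pi.zero_apply]

theorem ae_eq_zero_of_forall_integral_pow_mul_eq_zero (hμ : integrableExpSet id μ = Set.univ)
    (hg : MemLp g 2 μ) (hmom : ∀ n : ℕ, ∫ x, x ^ n * g x ∂μ = 0) : g =ᵐ[μ] 0 :=
  ae_eq_zero_of_forall_integral_cexp_mul_eq_zero (hg.integrable one_le_two)
    (integral_cexp_mul_eq_zero hμ hg hmom)

theorem ae_eq_zero_of_forall_integral_polynomial_mul_eq_zero {ι : Type*} {b : ι → ℝ[X]}
    (hμ : integrableExpSet id μ = Set.univ) (hb : ⊤ ≤ Submodule.span ℝ (Set.range b))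
    (hg : MemLp g 2 μ) (horth : ∀ i, ∫ x, (b i).eval x * g x ∂μ = 0) : g =ᵐ[μ] 0 := by
  have hint (p : ℝ[X]) : Integrable (fun x => p.eval x * g x) μ :=
    (memLp_two_polynomial_eval hμ p).integrable_mul hg
  have hall (p : ℝ[X]) : ∫ x, p.eval x * g x ∂μ = 0 := by
    induction hb (Submodule.mem_top : p ∈ ⊤) using Submodule.span_induction with
    | mem p hp =>
      obtain ⟨i, rfl⟩ := hp
      exact horth i
    | zero => simp only [eval_zero, zero_mul, integral_zero]
    | add p q _ _ hp hq =>
      simp only [eval_add, add_mul]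
      rw [integral_add (hint p) (hint q), hp, hq, add_zero]
    | smul c p _ hp =>
      simp only [eval_smul, smul_eq_mul, mul_assoc, integral_const_mul, hp, mul_zero]
  exact ae_eq_zero_of_forall_integral_pow_mul_eq_zero hμ hg fun n => by
    simpa only [eval_pow, eval_X] using hall (X ^ n)

/-- Parseval's identity for an orthogonal, not necessarily normalised, family. -/
theorem hasSum_integral_polynomial_mul_mul_integral_div {ι : Type*} {b : ι → ℝ[X]}
    (hμ : integrableExpSet id μ = Set.univ) (hb : ⊤ ≤ Submodule.span ℝ (Set.range b))
    (horth : Pairwise fun i j => ∫ x, (b i).eval x * (b j).eval x ∂μ = 0)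
    (hpos : ∀ i, 0 < ∫ x, (b i).eval x * (b i).eval x ∂μ)
    {f : ℝ → ℝ} (hf : MemLp f 2 μ) (hg : MemLp g 2 μ) :
    HasSum (fun i => (∫ x, (b i).eval x * f x ∂μ) * (∫ x, (b i).eval x * g x ∂μ) /
      ∫ x, (b i).eval x * (b i).eval x ∂μ) (∫ x, f x * g x ∂μ) := by
  set w : ι → Lp ℝ 2 μ := fun i => (memLp_two_polynomial_eval hμ (b i)).toLp
  have hinner (i) {h : ℝ → ℝ} (hh : MemLp h 2 μ) :
      inner ℝ (w i) (hh.toLp h) = ∫ x, (b i).eval x * h x ∂μ := inner_toLp_eq_integral_mul _ hh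
  simp only [← hinner _ hf, ← hinner _ hg, ← inner_toLp_eq_integral_mul hf hg,
    ← hinner _ (memLp_two_polynomial_eval hμ _)]
  refine hasSum_inner_mul_inner_div (fun i j hij => ?_) (fun i hi => ?_) (fun x hx => ?_) _ _
  · exact (hinner i _).trans (horth hij)
  · exact (hpos i).ne' <| by
      rw [← hinner i (memLp_two_polynomial_eval hμ (b i)), hi, inner_zero_left]
  · refine (Lp.eq_zero_iff_ae_eq_zero).mpr
      (ae_eq_zero_of_forall_integral_polynomial_mul_eq_zero hμ hb (Lp.memLp x) fun i => ?_)
    rw [← hinner i (Lp.memLp x), Lp.toLp_coeFn, hx i]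

theorem exists_polynomial_ae_eq {ι : Type*} {b : ι → ℝ[X]}
    (hμ : integrableExpSet id μ = Set.univ) (hb : ⊤ ≤ Submodule.span ℝ (Set.range b))
    (horth : Pairwise fun i j => ∫ x, (b i).eval x * (b j).eval x ∂μ = 0)
    (hpos : ∀ i, 0 < ∫ x, (b i).eval x * (b i).eval x ∂μ) (hg : MemLp g 2 μ)
    {s : Finset ι} (hs : ∀ i ∉ s, ∫ x, (b i).eval x * g x ∂μ = 0) :
    ∃ p : ℝ[X], g =ᵐ[μ] fun x => p.eval x := by
  have hpoly := memLp_two_polynomial_eval hμ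
  have hint {h : ℝ → ℝ} (hh : MemLp h 2 μ) (i : ι) : Integrable (fun x => (b i).eval x * h x) μ :=
    (hpoly (b i)).integrable_mul hh
  set a : ι → ℝ := fun i =>
    (∫ x, (b i).eval x * g x ∂μ) / ∫ x, (b i).eval x * (b i).eval x ∂μ
  have hcoeff (i : ι) : ∫ x, (b i).eval x * (∑ j ∈ s, a j • b j).eval x ∂μ =
      ∫ x, (b i).eval x * g x ∂μ := by
    simp only [eval_finsetSum, eval_smul, smul_eq_mul, Finset.mul_sum, mul_left_comm _ (a _)]
    rw [integral_finsetSum _ fun j _ => (hint (hpoly (b j)) i).const_mul _]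
    simp only [integral_const_mul]
    by_cases hi : i ∈ s
    · rw [Finset.sum_eq_single_of_mem i hi fun j _ hji => by rw [horth hji.symm, mul_zero],
        div_mul_cancel₀ _ (hpos i).ne']
    · rw [hs i hi, Finset.sum_eq_zero fun j hj => by
        rw [horth (ne_of_mem_of_not_mem hj hi).symm, mul_zero]]
  refine ⟨∑ j ∈ s, a j • b j, Filter.eventuallyEq_iff_sub.mpr
    (ae_eq_zero_of_forall_integral_polynomial_mul_eq_zero hμ hb (hg.sub (hpoly _)) fun i => ?_)⟩
  simp only [Pi.sub_apply, mul_sub]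
  rw [integral_sub (hint hg i) (hint (hpoly _) i), hcoeff, sub_self]

end MomentProblem

section Hermite

theorem derivative_physHermite_succ (n : ℕ) :
    derivative (physHermite (n + 1)) = (2 * (n + 1) : ℝ) • physHermite n := by
  induction n with
  | zero => simp [physHermite, ← C_ofNat, smul_eq_C_mul]
  | succ n ih =>
    have hrec : derivative (physHermite n) = 2 * X * physHermite n - physHermite (n + 1) := by
      rw [physHermite, sub_sub_cancel]
    rw [physHermite, derivative_sub, ih, derivative_smul, hrec]
    simp only [derivative_mul, derivative_ofNat, derivative_X, ih, smul_eq_C_mul, map_mul, map_add,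
      map_one, map_ofNat, map_natCast, Nat.cast_succ]
    ring

/-- The number operator `N = X D - D ^ 2 / 2`, of which `physHermite n` is an eigenvector with
eigenvalue `n`. -/
noncomputable def numberOp : Module.End ℝ ℝ[X] :=
  LinearMap.mulLeft ℝ X * derivative - (2⁻¹ : ℝ) • (derivative * derivative)

theorem numberOp_apply (p : ℝ[X]) :
    numberOp p = X * derivative p - (2⁻¹ : ℝ) • derivative (derivative p) := rfl

theorem numberOp_physHermite (n : ℕ) : numberOp (physHermite n) = (n : ℝ) • physHermite n := by
  rw [numberOp_apply]
  cases n with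
  | zero => simp [physHermite]
  | succ n =>
    have h2 : (C 2⁻¹ * 2 : ℝ[X]) = 1 := by
      rw [← C_ofNat, ← C_mul, inv_mul_cancel₀ two_ne_zero, C_1]
    rw [derivative_physHermite_succ, derivative_smul, physHermite]
    simp only [smul_eq_C_mul, map_mul, map_add, map_one, map_ofNat, map_natCast, Nat.cast_succ]
    linear_combination (-(n + 1) * derivative (physHermite n)) * h2

theorem derivative_derivative_physHermite (n : ℕ) :
    derivative (derivative (physHermite n)) - 2 * X * derivative (physHermite n) =
      (-2 * n : ℝ) • physHermite n := by
  rw [mul_smul, ← numberOp_physHermite, numberOp_apply, smul_sub, smul_smul, neg_mul,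
    mul_inv_cancel₀ two_ne_zero, neg_smul, neg_smul, one_smul,
    sub_neg_eq_add, smul_eq_C_mul, C_ofNat]
  ring

theorem degree_physHermite (n : ℕ) : (physHermite n).degree = n := by
  induction n with
  | zero => exact degree_one
  | succ n ih =>
    have hlead : (2 * X * physHermite n).degree = ((n + 1 : ℕ) : WithBot ℕ) := by
      rw [← C_ofNat, degree_mul, degree_C_mul_X two_ne_zero, ih, Nat.cast_succ, add_comm]
    have hlt : (derivative (physHermite n)).degree < (2 * X * physHermite n).degree := by
      rw [hlead]
      exact (degree_derivative_le.trans_eq ih).trans_lt (by exact_mod_cast n.lt_succ_self)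
    rw [physHermite, degree_sub_eq_left_of_degree_lt hlt, hlead]

theorem physHermite_ne_zero (n : ℕ) : physHermite n ≠ 0 := fun h => by
  simpa [h] using degree_physHermite n

/-- The Hermite polynomials as a sequence of polynomials of every degree. -/
noncomputable def physHermiteSequence : Polynomial.Sequence ℝ where
  elems' := physHermite
  degree_eq' := degree_physHermite

theorem linearIndependent_physHermite : LinearIndependent ℝ physHermite :=
  physHermiteSequence.linearIndependent

theorem span_range_physHermite : Submodule.span ℝ (Set.range physHermite) = ⊤ :=
  physHermiteSequence.span fun n => (leadingCoeff_ne_zero.mpr (physHermite_ne_zero n)).isUnit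

theorem aeval_numberOp_physHermite (w : ℝ[X]) (n : ℕ) :
    aeval numberOp w (physHermite n) = w.eval (n : ℝ) • physHermite n :=
  Module.End.aeval_apply_of_hasEigenvector
    ⟨Module.End.mem_eigenspace_iff.mpr (numberOp_physHermite n), physHermite_ne_zero n⟩

end Hermite

section GaussianWeight

open MeasureTheory ProbabilityTheory Real

/-- The centred Gaussian of variance `1 / 2`, with density `e^{-x²} / √π`: the normalised weight of
the Hermite polynomials. -/
noncomputable abbrev hermiteMeasure : Measure ℝ := gaussianReal 0 2⁻¹

theorem gaussianPDFReal_zero_inv_two (x : ℝ) :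
    gaussianPDFReal 0 2⁻¹ x = (√π)⁻¹ * exp (-x ^ 2) := by
  have hvar : 2 * π * (2⁻¹ : NNReal) = π := by
    rw [NNReal.coe_inv, NNReal.coe_ofNat, mul_right_comm, mul_inv_cancel₀ two_ne_zero, one_mul]
  rw [gaussianPDFReal, hvar, sub_zero, NNReal.coe_inv, NNReal.coe_ofNat,
    mul_inv_cancel₀ two_ne_zero, div_one]

theorem setIntegral_hermiteMeasure {s : Set ℝ} (hs : MeasurableSet s) (f : ℝ → ℝ) :
    ∫ x in s, f x ∂hermiteMeasure = (√π)⁻¹ * ∫ x in s, f x * exp (-x ^ 2) := by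
  rw [hermiteMeasure, gaussianReal_of_var_ne_zero _ (inv_ne_zero two_ne_zero),
    setIntegral_withDensity_eq_setIntegral_toReal_smul (measurable_gaussianPDF _ _)
      (.of_forall fun _ => gaussianPDF_lt_top) _ hs, ← integral_const_mul]
  simp only [toReal_gaussianPDF, gaussianPDFReal_zero_inv_two, smul_eq_mul, mul_assoc,
    mul_comm (exp _)]

theorem integral_hermiteMeasure (f : ℝ → ℝ) :
    ∫ x, f x ∂hermiteMeasure = (√π)⁻¹ * ∫ x, f x * exp (-x ^ 2) := by
  simpa only [setIntegral_univ] using setIntegral_hermiteMeasure .univ f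

theorem integrable_hermiteMeasure_iff {f : ℝ → ℝ} :
    Integrable f hermiteMeasure ↔ Integrable fun x => f x * exp (-x ^ 2) := by
  rw [hermiteMeasure, gaussianReal_of_var_ne_zero _ (inv_ne_zero two_ne_zero),
    integrable_withDensity_iff_integrable_smul' (measurable_gaussianPDF _ _)
      (.of_forall fun _ => gaussianPDF_lt_top)]
  simp only [toReal_gaussianPDF, gaussianPDFReal_zero_inv_two, smul_eq_mul, mul_assoc,
    mul_comm (exp _)]
  exact integrable_const_mul_iff (by simp [pi_pos.ne', pi_pos.le]) _

theorem integrableExpSet_id_hermiteMeasure : integrableExpSet id hermiteMeasure = Set.univ :=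
  integrableExpSet_id_gaussianReal

theorem integrable_polynomial_mul_exp_neg_sq (p : ℝ[X]) :
    Integrable fun x => p.eval x * exp (-x ^ 2) :=
  integrable_hermiteMeasure_iff.mp
    (integrable_polynomial_eval integrableExpSet_id_hermiteMeasure p)

theorem hasDerivAt_polynomial_mul_exp_neg_sq (q : ℝ[X]) (x : ℝ) :
    HasDerivAt (fun x => q.eval x * exp (-x ^ 2))
      ((derivative q - 2 * X * q).eval x * exp (-x ^ 2)) x := by
  convert! (q.hasDerivAt x).mul ((hasDerivAt_pow 2 x).neg.exp) using 1
  simp only [eval_sub, eval_mul, eval_ofNat, eval_X, Pi.neg_apply]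
  push_cast
  ring

theorem integral_derivative_sub_two_mul_X_mul (q : ℝ[X]) :
    ∫ x, (derivative q - 2 * X * q).eval x ∂hermiteMeasure = 0 := by
  rw [integral_hermiteMeasure, integral_eq_zero_of_hasDerivAt_of_integrable
    (hasDerivAt_polynomial_mul_exp_neg_sq q) (integrable_polynomial_mul_exp_neg_sq _)
    (integrable_polynomial_mul_exp_neg_sq q), mul_zero]

theorem setIntegral_Ioi_derivative_sub_two_mul_X_mul {q : ℝ[X]} {a : ℝ} (ha : q.eval a = 0) :
    ∫ x in Set.Ioi a, (derivative q - 2 * X * q).eval x ∂hermiteMeasure = 0 := by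
  have hderiv := hasDerivAt_polynomial_mul_exp_neg_sq q
  have hint (p : ℝ[X]) := (integrable_polynomial_mul_exp_neg_sq p).integrableOn (s := Set.Ioi a)
  rw [setIntegral_hermiteMeasure measurableSet_Ioi, integral_Ioi_of_hasDerivAt_of_tendsto'
    (fun x _ => hderiv x) (hint _) (tendsto_zero_of_hasDerivAt_of_integrableOn_Ioi
      (fun x _ => hderiv x) (hint _) (hint q)), ha, zero_mul, sub_zero, mul_zero]

/-- The boundary term in Green's formula for the symmetric operator `N`. -/
theorem numberOp_mul_sub_mul_numberOp (p g : ℝ[X]) :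
    numberOp p * g - p * numberOp g = (-2⁻¹ : ℝ) •
      (derivative (derivative p * g - p * derivative g) -
        2 * X * (derivative p * g - p * derivative g)) := by
  have h2 : (C 2⁻¹ * 2 : ℝ[X]) = 1 := by
    rw [← C_ofNat, ← C_mul, inv_mul_cancel₀ two_ne_zero, C_1]
  simp only [numberOp_apply, derivative_sub, derivative_mul, smul_eq_C_mul, C_neg]
  linear_combination (-X * (derivative p * g - p * derivative g)) * h2

theorem integral_numberOp_mul (p g : ℝ[X]) :
    ∫ x, (numberOp p * g).eval x ∂hermiteMeasure =
      ∫ x, (p * numberOp g).eval x ∂hermiteMeasure := by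
  have hint := integrable_polynomial_eval integrableExpSet_id_hermiteMeasure
  rw [← sub_eq_zero, ← integral_sub (hint _) (hint _)]
  simp only [← eval_sub, numberOp_mul_sub_mul_numberOp, eval_smul, integral_smul,
    integral_derivative_sub_two_mul_X_mul, smul_zero]

theorem setIntegral_Ioi_numberOp_mul {p : ℝ[X]} {a : ℝ} (hp : (X - C a) ^ 2 ∣ p) (g : ℝ[X]) :
    ∫ x in Set.Ioi a, (numberOp p * g).eval x ∂hermiteMeasure =
      ∫ x in Set.Ioi a, (p * numberOp g).eval x ∂hermiteMeasure := by
  have hint (q : ℝ[X]) := (integrable_polynomial_eval integrableExpSet_id_hermiteMeasure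
    q).integrableOn (s := Set.Ioi a)
  have hboundary : (derivative p * g - p * derivative g).eval a = 0 := by
    obtain ⟨s, rfl⟩ := hp
    simp [derivative_mul, derivative_X_sub_C_pow]
  rw [← sub_eq_zero, ← integral_sub (hint _) (hint _)]
  simp only [← eval_sub, numberOp_mul_sub_mul_numberOp, eval_smul, integral_smul,
    setIntegral_Ioi_derivative_sub_two_mul_X_mul hboundary, smul_zero]

theorem X_sub_C_pow_dvd_numberOp {p : ℝ[X]} {a : ℝ} {m : ℕ} (hp : (X - C a) ^ (m + 2) ∣ p) :
    (X - C a) ^ m ∣ numberOp p := by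
  have h1 : (X - C a) ^ (m + 1) ∣ derivative p := by
    simpa using pow_sub_one_dvd_derivative_of_pow_dvd hp
  have h2 : (X - C a) ^ m ∣ derivative (derivative p) := by
    simpa using pow_sub_one_dvd_derivative_of_pow_dvd h1
  rw [numberOp_apply, smul_eq_C_mul]
  exact dvd_sub (((pow_dvd_pow _ m.le_succ).trans h1).mul_left X) (h2.mul_left _)

theorem setIntegral_Ioi_numberOp_pow_mul (i : ℕ) {p : ℝ[X]} {a : ℝ}
    (hp : (X - C a) ^ (2 * i) ∣ p) (g : ℝ[X]) :
    ∫ x in Set.Ioi a, ((numberOp ^ i) p * g).eval x ∂hermiteMeasure =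
      ∫ x in Set.Ioi a, (p * (numberOp ^ i) g).eval x ∂hermiteMeasure := by
  induction i generalizing p g with
  | zero => rfl
  | succ i ih =>
    rw [pow_succ, Module.End.mul_apply, ih (X_sub_C_pow_dvd_numberOp hp),
      setIntegral_Ioi_numberOp_mul ((pow_dvd_pow _ (by lia)).trans hp), ← Module.End.mul_apply,
      ← pow_succ', pow_succ]

theorem setIntegral_Ioi_aeval_numberOp_mul {u p : ℝ[X]} {a : ℝ}
    (hp : (X - C a) ^ (2 * u.natDegree) ∣ p) (g : ℝ[X]) :
    ∫ x in Set.Ioi a, (aeval numberOp u p * g).eval x ∂hermiteMeasure =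
      ∫ x in Set.Ioi a, (p * aeval numberOp u g).eval x ∂hermiteMeasure := by
  have hint (q : ℝ[X]) := (integrable_polynomial_eval integrableExpSet_id_hermiteMeasure
    q).integrableOn (s := Set.Ioi a)
  simp only [aeval_eq_sum_range, LinearMap.sum_apply, LinearMap.smul_apply, Finset.sum_mul,
    Finset.mul_sum, smul_mul_assoc, mul_smul_comm, eval_finsetSum, eval_smul, smul_eq_mul]
  rw [integral_finsetSum _ fun i _ => (hint _).const_mul _,
    integral_finsetSum _ fun i _ => (hint _).const_mul _]
  refine Finset.sum_congr rfl fun i hi => ?_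
  rw [integral_const_mul, integral_const_mul, setIntegral_Ioi_numberOp_pow_mul i
    ((pow_dvd_pow _ (Nat.mul_le_mul_left 2 (Finset.mem_range_succ_iff.mp hi))).trans hp)]

theorem integral_physHermite_mul_of_ne {n m : ℕ} (hnm : n ≠ m) :
    ∫ x, (physHermite n).eval x * (physHermite m).eval x ∂hermiteMeasure = 0 := by
  have hsymm := integral_numberOp_mul (physHermite n) (physHermite m)
  simp only [numberOp_physHermite, smul_mul_assoc, mul_smul_comm, eval_smul, eval_mul,
    smul_eq_mul, integral_const_mul] at hsymm
  exact (mul_eq_mul_right_iff.mp hsymm).resolve_left (Nat.cast_injective.ne hnm)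

end GaussianWeight

section KreinAdler

open MeasureTheory ProbabilityTheory

instance isOpenPosMeasure_hermiteMeasure : hermiteMeasure.IsOpenPosMeasure :=
  (gaussianReal_absolutelyContinuous' 0 (inv_ne_zero two_ne_zero)).isOpenPosMeasure

theorem integral_physHermite_mul_self_pos (n : ℕ) :
    0 < ∫ x, (physHermite n).eval x * (physHermite n).eval x ∂hermiteMeasure := by
  obtain ⟨x, hx⟩ : ∃ x, (physHermite n).eval x ≠ 0 := by
    by_contra! h
    exact physHermite_ne_zero n (funext fun x => by rw [h x, eval_zero])
  exact integral_pos_of_integrable_nonneg_nonzero (by fun_prop)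
    (by simpa only [← eval_mul] using
      integrable_polynomial_eval integrableExpSet_id_hermiteMeasure (physHermite n * physHermite n))
    (fun y => mul_self_nonneg ((physHermite n).eval y)) (mul_self_ne_zero.mpr hx)

theorem eq_zero_of_ae_restrict_eval_eq_zero {μ : Measure ℝ} [μ.IsOpenPosMeasure] {p : ℝ[X]}
    {s : Set ℝ} (hs : IsOpen s) (hinf : s.Infinite)
    (hp : (fun x => p.eval x) =ᵐ[μ.restrict s] fun _ => 0) : p = 0 :=
  eq_zero_of_infinite_isRoot p <| hinf.mono <|
    Measure.eqOn_open_of_ae_eq hp hs p.continuousOn continuousOn_const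

theorem integral_physHermite_mul_indicator_aeval_numberOp {u f : ℝ[X]} {a : ℝ}
    (hu : (X - C a) ^ (2 * u.natDegree) ∣ f) (n : ℕ) :
    ∫ x, (physHermite n).eval x *
        (Set.Ioi a).indicator (fun x => (aeval numberOp u f).eval x) x ∂hermiteMeasure =
      u.eval (n : ℝ) * ∫ x, (physHermite n).eval x *
        (Set.Ioi a).indicator (fun x => f.eval x) x ∂hermiteMeasure := by
  have htrunc (p : ℝ[X]) : ∫ x, (physHermite n).eval x *
      (Set.Ioi a).indicator (fun x => p.eval x) x ∂hermiteMeasure =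
      ∫ x in Set.Ioi a, (p * physHermite n).eval x ∂hermiteMeasure := by
    simp only [← Set.indicator_mul_right _ (fun x => (physHermite n).eval x), eval_mul, mul_comm]
    rw [integral_indicator measurableSet_Ioi]
  rw [htrunc, htrunc, setIntegral_Ioi_aeval_numberOp_mul hu, aeval_numberOp_physHermite,
    mul_smul_comm]
  simp only [eval_smul, smul_eq_mul, integral_const_mul]

/-- A positivity argument of Krein and Adler: beyond a high order zero of `f` the operators `u(N)`
and `v(N)` are symmetric against `f`, so `0 = ⟨f, u(N) v(N) f⟩` is the sum of the nonnegative terms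
`u(n) v(n) ⟨H_n, f⟩² / ⟨H_n, H_n⟩`. -/
theorem integral_physHermite_mul_indicator_eq_zero {u v f : ℝ[X]} {a : ℝ}
    (hu : (X - C a) ^ (2 * u.natDegree) ∣ f) (hv : (X - C a) ^ (2 * v.natDegree) ∣ f)
    (hnonneg : ∀ n : ℕ, 0 ≤ (u * v).eval (n : ℝ)) (hf : aeval numberOp (u * v) f = 0)
    {n : ℕ} (hn : (u * v).eval (n : ℝ) ≠ 0) :
    ∫ x, (physHermite n).eval x *
      (Set.Ioi a).indicator (fun x => f.eval x) x ∂hermiteMeasure = 0 := by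
  have hL2 (p : ℝ[X]) : MemLp ((Set.Ioi a).indicator fun x => p.eval x) 2 hermiteMeasure :=
    (memLp_two_polynomial_eval integrableExpSet_id_hermiteMeasure p).indicator measurableSet_Ioi
  have hinner : ∫ x, (Set.Ioi a).indicator (fun x => (aeval numberOp u f).eval x) x *
      (Set.Ioi a).indicator (fun x => (aeval numberOp v f).eval x) x ∂hermiteMeasure = 0 := by
    simp only [← Set.indicator_mul, ← eval_mul]
    rw [integral_indicator measurableSet_Ioi, setIntegral_Ioi_aeval_numberOp_mul hu,
      ← Module.End.mul_apply, ← map_mul, hf]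
    simp only [mul_zero, eval_zero, integral_zero]
  have hparseval := hasSum_integral_polynomial_mul_mul_integral_div
    integrableExpSet_id_hermiteMeasure span_range_physHermite.ge
    (fun _ _ => integral_physHermite_mul_of_ne) integral_physHermite_mul_self_pos
    (hL2 (aeval numberOp u f)) (hL2 (aeval numberOp v f))
  rw [hinner] at hparseval
  simp only [integral_physHermite_mul_indicator_aeval_numberOp hu,
    integral_physHermite_mul_indicator_aeval_numberOp hv] at hparseval
  have hterm := congrFun ((hasSum_zero_iff_of_nonneg fun k => div_nonneg ?_
    (integral_physHermite_mul_self_pos k).le).mp hparseval) n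
  · have hprod := (div_eq_zero_iff.mp hterm).resolve_right (integral_physHermite_mul_self_pos n).ne'
    rw [mul_mul_mul_comm, ← eval_mul] at hprod
    exact mul_self_eq_zero.mp ((mul_eq_zero.mp hprod).resolve_left hn)
  · rw [mul_mul_mul_comm, ← eval_mul]
    exact mul_nonneg (hnonneg k) (mul_self_nonneg _)

theorem eq_zero_of_integral_physHermite_mul_indicator_eq_zero {f : ℝ[X]} {a : ℝ} {s : Finset ℕ}
    (hs : ∀ n ∉ s, ∫ x, (physHermite n).eval x *
      (Set.Ioi a).indicator (fun x => f.eval x) x ∂hermiteMeasure = 0) : f = 0 := by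
  obtain ⟨p, hp⟩ := exists_polynomial_ae_eq integrableExpSet_id_hermiteMeasure
    span_range_physHermite.ge (fun _ _ => integral_physHermite_mul_of_ne)
    integral_physHermite_mul_self_pos
    ((memLp_two_polynomial_eval integrableExpSet_id_hermiteMeasure f).indicator
      measurableSet_Ioi) hs
  have hp0 : p = 0 := by
    refine eq_zero_of_ae_restrict_eval_eq_zero (μ := hermiteMeasure) isOpen_Iio
      (Set.Iio_infinite a) ?_
    filter_upwards [ae_restrict_of_ae hp, ae_restrict_mem measurableSet_Iio] with x hx hxa
    rw [← hx, Set.indicator_of_notMem (Set.notMem_Ioi.mpr (Set.mem_Iio.mp hxa).le)]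
  refine eq_zero_of_ae_restrict_eval_eq_zero (μ := hermiteMeasure) isOpen_Ioi
    (Set.Ioi_infinite a) ?_
  filter_upwards [ae_restrict_of_ae hp, ae_restrict_mem measurableSet_Ioi] with x hx hxa
  rw [← Set.indicator_of_mem hxa fun x => f.eval x, hx, hp0, eval_zero]

theorem eq_zero_of_aeval_numberOp_mul_eq_zero {u v f : ℝ[X]} {a : ℝ}
    (hu : (X - C a) ^ (2 * u.natDegree) ∣ f) (hv : (X - C a) ^ (2 * v.natDegree) ∣ f)
    (huv : u * v ≠ 0) (hnonneg : ∀ n : ℕ, 0 ≤ (u * v).eval (n : ℝ))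
    (hf : aeval numberOp (u * v) f = 0) : f = 0 := by
  have hfin : {n : ℕ | (u * v).IsRoot (n : ℝ)}.Finite :=
    (finite_setOfPred_isRoot huv).preimage Nat.cast_injective.injOn
  exact eq_zero_of_integral_physHermite_mul_indicator_eq_zero (s := hfin.toFinset) fun n hn =>
    integral_physHermite_mul_indicator_eq_zero hu hv hnonneg hf fun h =>
      hn (hfin.mem_toFinset.mpr h)

end KreinAdler

section NonvanishingWronskian

theorem X_sub_C_pow_dvd_of_eval_iterate_derivative_eq_zero {p : ℝ[X]} {a : ℝ} {m : ℕ}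
    (h : ∀ i < m, (derivative^[i] p).eval a = 0) : (X - C a) ^ m ∣ p := by
  rcases eq_or_ne p 0 with rfl | hp
  · exact dvd_zero _
  rcases m with _ | m
  · exact one_dvd _
  · exact (le_rootMultiplicity_iff hp).mp <| lt_rootMultiplicity_of_isRoot_iterate_derivative hp
      fun i hi => h i (Nat.lt_succ_iff.mpr hi)

theorem exists_X_sub_C_pow_dvd_sum_smul_of_eval_Wron_eq_zero {r : ℕ} {f : Fin r → ℝ[X]} {a : ℝ}
    (h : (Wron f).eval a = 0) : ∃ c : Fin r → ℝ, c ≠ 0 ∧ (X - C a) ^ r ∣ ∑ j, c j • f j := by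
  rw [Wron, ← coe_evalRingHom, RingHom.map_det] at h
  obtain ⟨c, hc, hzero⟩ := Matrix.exists_mulVec_eq_zero_iff.mpr h
  refine ⟨c, hc, X_sub_C_pow_dvd_of_eval_iterate_derivative_eq_zero fun i hi => ?_⟩
  simpa [Matrix.mulVec, dotProduct, iterate_derivative_sum, eval_finsetSum, mul_comm] using
    congrFun hzero ⟨i, hi⟩

theorem eval_Wron_physHermite_ne_zero {r : ℕ} (hr : Even r) {k : Fin r → ℕ}
    (hk : Function.Injective k) (hnonneg : ∀ n : ℕ, 0 ≤ ∏ j, ((n : ℝ) - k j)) (a : ℝ) :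
    (Wron fun j => physHermite (k j)).eval a ≠ 0 := by
  obtain ⟨s, rfl⟩ := hr
  intro hzero
  obtain ⟨c, hc, hdvd⟩ := exists_X_sub_C_pow_dvd_sum_smul_of_eval_Wron_eq_zero hzero
  set u : ℝ[X] := ∏ j : Fin s, (X - C (k (Fin.castAdd s j) : ℝ))
  set v : ℝ[X] := ∏ j : Fin s, (X - C (k (Fin.natAdd s j) : ℝ))
  have huv : u * v = ∏ j, (X - C (k j : ℝ)) := by rw [Fin.prod_univ_add]
  have hdegree (l : Fin s → ℝ) : 2 * (∏ j, (X - C (l j))).natDegree = s + s := by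
    rw [natDegree_finsetProd_X_sub_C_eq_card, Finset.card_fin, two_mul]
  have hkill : aeval numberOp (u * v) (∑ j, c j • physHermite (k j)) = 0 := by
    have hroot (j) : (u * v).eval (k j : ℝ) = 0 := by
      rw [huv, eval_prod]
      exact Finset.prod_eq_zero (Finset.mem_univ j) (by rw [eval_sub, eval_X, eval_C, sub_self])
    simp only [map_sum, map_smul, aeval_numberOp_physHermite, hroot, zero_smul, smul_zero,
      Finset.sum_const_zero]
  have hsum : ∑ j, c j • physHermite (k j) = 0 := by
    refine eq_zero_of_aeval_numberOp_mul_eq_zero (u := u) (v := v) (a := a) ?_ ?_ ?_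
      (fun n => ?_) hkill
    · rwa [hdegree]
    · rwa [hdegree]
    · exact huv ▸ Finset.prod_ne_zero_iff.mpr fun j _ => X_sub_C_ne_zero _
    · simpa only [huv, eval_prod, eval_sub, eval_X, eval_C] using hnonneg n
  exact hc (_root_.funext (Fintype.linearIndependent_iff.mp
    (linearIndependent_physHermite.comp k hk) c hsum))

end NonvanishingWronskian

section EvenPartition

variable {r : ℕ} {lam : Fin r → ℕ}

theorem IsPartition.strictMono_rev_add (h : IsPartition r lam) :
    StrictMono fun j : Fin r => lam (Fin.rev j) + j := fun _ _ hij =>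
  add_lt_add_of_le_of_lt (h.1 _ _ (Fin.rev_le_rev.mpr hij.le)) hij

theorem natCast_sub_mul_natCast_sub_succ_nonneg (n a : ℕ) :
    0 ≤ ((n : ℝ) - a) * ((n : ℝ) - (a + 1 : ℕ)) := by
  push_cast
  rcases le_or_gt n a with h | h
  · have : (n : ℝ) ≤ a := by exact_mod_cast h
    nlinarith
  · have : (a : ℝ) + 1 ≤ n := by exact_mod_cast h
    nlinarith

theorem IsEvenPartition.prod_natCast_sub_nonneg (h : IsEvenPartition r lam) (n : ℕ) :
    0 ≤ ∏ j : Fin r, ((n : ℝ) - (lam (Fin.rev j) + j : ℕ)) := by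
  obtain ⟨s, rfl⟩ := h.2.1
  let e : Fin s × Fin 2 ≃ Fin (s + s) :=
    finProdFinEquiv.trans ((finCongr (mul_two s)).trans Fin.revPerm)
  have he (k : Fin s) (i : Fin 2) : e (k, i) = Fin.rev ⟨2 * k + i, by lia⟩ :=
    congrArg Fin.rev (Fin.ext (add_comm _ _))
  rw [← e.prod_comp, Fintype.prod_prod_type]
  refine Finset.prod_nonneg fun k _ => ?_
  have hfst : lam (Fin.rev (e (k, 0))) + e (k, 0) =
      lam ⟨2 * k, by lia⟩ + (s + s - 2 - 2 * k) + 1 := by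
    simp only [he, Fin.rev_rev, Fin.val_rev, Fin.val_zero, add_zero]
    lia
  have hsnd : lam (Fin.rev (e (k, 1))) + e (k, 1) =
      lam ⟨2 * k, by lia⟩ + (s + s - 2 - 2 * k) := by
    simp only [he, Fin.rev_rev, Fin.val_rev, Fin.val_one, h.2.2 k (by lia)]
    lia
  rw [Fin.prod_univ_two, hfst, hsnd, mul_comm]
  exact natCast_sub_mul_natCast_sub_succ_nonneg n _

theorem eval_genHermite_ne_zero (h : IsEvenPartition r lam) (t : ℝ) :
    (genHermite r lam).eval t ≠ 0 :=
  eval_Wron_physHermite_ne_zero h.2.1 h.1.strictMono_rev_add.injective h.prod_natCast_sub_nonneg t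

end EvenPartition

section ExceptionalHermite

open MeasureTheory

theorem wronskianMatrix_det_eq_Wron {r : ℕ} (f : Fin r → ℝ[X]) :
    (wronskianMatrix (derivative' (R := ℝ)) f).det = Wron f :=
  congrArg Matrix.det <| Matrix.ext fun i j => by
    simp only [wronskianMatrix, Matrix.of_apply, Module.End.pow_apply]
    rfl

theorem XHermite_eq_crumOp (r : ℕ) (lam : Fin r → ℕ) (n : ℕ) :
    XHermite r lam n = crumOp (derivative' (R := ℝ))
      (fun j => physHermite (lam (Fin.rev j) + j)) (physHermite (n + r - ∑ i, lam i)) := by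
  rw [crumOp_apply, wronskianMatrix_det_eq_Wron, XHermite]
  refine congrArg Wron (_root_.funext fun j => ?_)
  induction j using Fin.lastCases with
  | last => simp
  | cast j => simp

theorem XHermite_lagrange_identity {r : ℕ} {lam : Fin r → ℕ} {n m : ℕ}
    (hH : genHermite r lam ≠ 0) (hn : ∑ i, lam i ≤ n + r) (hm : ∑ i, lam i ≤ m + r) :
    genHermite r lam * derivative (derivative (XHermite r lam n) * XHermite r lam m -
        XHermite r lam n * derivative (XHermite r lam m)) -
      (2 * derivative (genHermite r lam) + 2 * X * genHermite r lam) *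
        (derivative (XHermite r lam n) * XHermite r lam m -
          XHermite r lam n * derivative (XHermite r lam m)) =
      (2 * (m - n) : ℝ) • (genHermite r lam * (XHermite r lam n * XHermite r lam m)) := by
  have hode (k : ℕ) : derivative' (R := ℝ) (derivative' (R := ℝ) (physHermite k)) -
      2 * X * derivative' (R := ℝ) (physHermite k) - 0 * physHermite k =
        (-2 * k : ℝ) • physHermite k := by
    rw [zero_mul, sub_zero]
    exact derivative_derivative_physHermite k
  have hWron := wronskianMatrix_det_eq_Wron fun j => physHermite (lam (Fin.rev j) + j)
  have hident := crumOp_lagrange_identity (hWron ▸ hH) (fun j => hode (lam (Fin.rev j) + j))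
    (hode (n + r - ∑ i, lam i)) (hode (m + r - ∑ i, lam i))
  rw [hWron, ← XHermite_eq_crumOp, ← XHermite_eq_crumOp] at hident
  convert! hident using 2
  push_cast [hn, hm]
  ring

theorem integrable_eval_mul_exp_neg_sq_div_sq (p : ℝ[X]) {q : ℝ[X]} (hq : ∀ t, q.eval t ≠ 0) :
    Integrable fun t => p.eval t * (Real.exp (-t ^ 2) / q.eval t ^ 2) := by
  obtain ⟨t₀, ht₀⟩ := q.exists_forall_norm_le
  have hcont : Continuous fun t => (q.eval t ^ 2)⁻¹ :=
    (by fun_prop : Continuous fun t => q.eval t ^ 2).inv₀ fun t => pow_ne_zero 2 (hq t)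
  have hbound (t : ℝ) : ‖(q.eval t ^ 2)⁻¹‖ ≤ (q.eval t₀ ^ 2)⁻¹ := by
    rw [Real.norm_of_nonneg (inv_nonneg.mpr (sq_nonneg _))]
    exact inv_anti₀ (sq_pos_of_ne_zero (hq t₀)) (sq_le_sq.mpr (ht₀ t))
  simpa only [div_eq_mul_inv, mul_assoc] using
    (integrable_polynomial_mul_exp_neg_sq p).mul_bdd hcont.aestronglyMeasurable
      (.of_forall hbound)

theorem hasDerivAt_eval_mul_exp_neg_sq_div_sq (p : ℝ[X]) {q : ℝ[X]} {t : ℝ} (hq : q.eval t ≠ 0) :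
    HasDerivAt (fun t => p.eval t * (Real.exp (-t ^ 2) / q.eval t ^ 2))
      ((q * derivative p - (2 * derivative q + 2 * X * q) * p).eval t *
        (Real.exp (-t ^ 2) / q.eval t ^ 3)) t := by
  have hexp : HasDerivAt (fun t : ℝ => Real.exp (-t ^ 2)) (Real.exp (-t ^ 2) * -(2 * t)) t := by
    simpa using (hasDerivAt_pow 2 t).neg.exp
  convert! (p.hasDerivAt t).mul (hexp.div ((q.hasDerivAt t).pow 2) (pow_ne_zero 2 hq)) using 1
  simp only [eval_sub, eval_add, eval_mul, eval_ofNat, eval_X, Pi.pow_apply, Pi.div_apply,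
    Nat.cast_ofNat]
  field_simp
  ring

theorem XHermite_orthogonality_general (r : ℕ) (lam : Fin r → ℕ)
    (hH : ∀ t, (genHermite r lam).eval t ≠ 0) (n m : ℕ) (hn : ∑ i, lam i ≤ n + r)
    (hm : ∑ i, lam i ≤ m + r) (hnm : n ≠ m) :
    ∫ t : ℝ, (XHermite r lam n).eval t * (XHermite r lam m).eval t *
      (Real.exp (-t ^ 2) / ((genHermite r lam).eval t) ^ 2) = 0 := by
  set H := genHermite r lam
  set V := derivative (XHermite r lam n) * XHermite r lam m -
    XHermite r lam n * derivative (XHermite r lam m)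
  have hH0 : H ≠ 0 := fun h => hH 0 (by rw [h, eval_zero])
  have hderiv (t : ℝ) : HasDerivAt (fun t => V.eval t * (Real.exp (-t ^ 2) / H.eval t ^ 2))
      (2 * (m - n) * ((XHermite r lam n * XHermite r lam m).eval t *
        (Real.exp (-t ^ 2) / H.eval t ^ 2))) t := by
    convert! hasDerivAt_eval_mul_exp_neg_sq_div_sq V (hH t) using 1
    rw [XHermite_lagrange_identity hH0 hn hm, eval_smul, eval_mul (p := H), smul_eq_mul]
    field_simp [hH t]
  have hint (p : ℝ[X]) := integrable_eval_mul_exp_neg_sq_div_sq p hH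
  have hzero := integral_eq_zero_of_hasDerivAt_of_integrable hderiv ((hint _).const_mul _) (hint V)
  have hc : (2 * (m - n) : ℝ) ≠ 0 :=
    mul_ne_zero two_ne_zero (sub_ne_zero.mpr (Nat.cast_injective.ne hnm.symm))
  simp only [integral_const_mul, eval_mul] at hzero
  exact (mul_eq_zero.mp hzero).resolve_left hc

end ExceptionalHermite

/-- Eq. (9): orthogonality of the exceptional Hermite polynomials. For an even
partition `λ` and `n ≠ m` in `N_λ`,
`∫_{-∞}^{∞} P_n(x) P_m(x) e^{-x²}/H_λ(x)² dx = 0`. -/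
theorem XHermite_orthogonality
    (r : ℕ) (lam : Fin r → ℕ) (hpart : IsEvenPartition r lam)
    (n m : ℕ) (hn : XDegSeq r lam n) (hm : XDegSeq r lam m) (hnm : n ≠ m) :
    ∫ t : ℝ, (XHermite r lam n).eval t * (XHermite r lam m).eval t *
      (Real.exp (-t ^ 2) / ((genHermite r lam).eval t) ^ 2) = 0 :=
  XHermite_orthogonality_general r lam (eval_genHermite_ne_zero hpart) n m hn.1 hm.1 hnm
end

section
/- For every non-negative integer j, the following Mehler–Heine type limits hold uniformly on compact subsets of the complex plane: with a_{2n} = (−1)^n √(nπ)/(2^{2n} n!) and a_{2n+1} = (−1)^n √π/(2^{2n+1} n!), one has (a_{2n}/(2√n)^j) · H_{2n}^{(j)}(x/(2√n)) → (d/dx)^j cos x and (a_{2n+1}/(2√n)^j) · H_{2n+1}^{(j)}(x/(2√n)) → (d/dx)^j sin x as n → ∞, where H_m^{(j)} denotes the j-th derivative of the Hermite polynomial H_m. -/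
open Polynomial

/-! The coefficient of `x ^ (2i + r)` in `a_{2n+r} H_{2n+r}(x / (2√n))`, `r ∈ {0, 1}`, is
`(-1) ^ i / (2i + r)!`, the coefficient of `cos` or `sin`, times a normalisation that tends to `1`
by Wallis' product, times `n (n - 1) ⋯ (n - i + 1) / n ^ i ∈ [0, 1]`, which also tends to `1`.
Tannery's theorem therefore gives locally uniform convergence on `ℂ`, and by Weierstrass' theorem
locally uniform convergence of holomorphic functions passes to all derivatives.
-/

section

open Filter Topology Real
open scoped Nat

variable {ι 𝕜 E R : Type*}

theorem tendstoUniformlyOn_tsum_smul {β X : Type*} [NormedField 𝕜] [NormedAddCommGroup E]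
    [NormedSpace 𝕜 E] [CompleteSpace E] {l : Filter ι} [NeBot l] {s : Set X} {c : ι → β → 𝕜}
    {c₀ : β → 𝕜} {g : β → X → E} {u : β → ℝ} {B : ℝ} (hu : Summable u)
    (hg : ∀ k, ∀ x ∈ s, ‖g k x‖ ≤ u k) (hc : ∀ k, Tendsto (fun n => c n k) l (𝓝 (c₀ k)))
    (hB : ∀ᶠ n in l, ∀ k, ‖c n k‖ ≤ B) :
    TendstoUniformlyOn (fun n x => ∑' k, c n k • g k x) (fun x => ∑' k, c₀ k • g k x) l s := by
  rcases s.eq_empty_or_nonempty with rfl | ⟨x₀, hx₀⟩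
  · exact tendstoUniformlyOn_empty
  have hu₀ k : 0 ≤ u k := (norm_nonneg _).trans (hg k x₀ hx₀)
  have hB₀ k : ‖c₀ k‖ ≤ B := le_of_tendsto (hc k).norm (hB.mono fun _ h => h k)
  have summable_smul {b : β → 𝕜} (hb : ∀ k, ‖b k‖ ≤ B) {x : X} (hx : x ∈ s) :
      Summable fun k => b k • g k x :=
    (hu.mul_left B).of_norm_bounded fun k => (norm_smul_le _ _).trans <|
      mul_le_mul (hb k) (hg k x hx) (norm_nonneg _) ((norm_nonneg _).trans (hb k))
  have norm_sub_mul_le {n : ι} (hn : ∀ k, ‖c n k‖ ≤ B) (k : β) :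
      ‖‖c₀ k - c n k‖ * u k‖ ≤ (B + B) * u k := by
    rw [norm_mul, norm_norm, Real.norm_of_nonneg (hu₀ k)]
    exact mul_le_mul_of_nonneg_right (norm_sub_le_of_le (hB₀ k) (hn k)) (hu₀ k)
  have tendsto_majorant : Tendsto (fun n => ∑' k, ‖c₀ k - c n k‖ * u k) l (𝓝 0) := by
    rw [← tsum_zero (α := ℝ) (β := β)]
    refine tendsto_tsum_of_dominated_convergence (hu.mul_left (B + B)) (fun k => ?_)
      (hB.mono fun n hn k => norm_sub_mul_le hn k)
    simpa using ((hc k).const_sub (c₀ k)).norm.mul_const (u k)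
  rw [Metric.tendstoUniformlyOn_iff]
  intro ε hε
  filter_upwards [hB, tendsto_majorant.eventually_lt_const hε] with n hn hε x hx
  refine lt_of_le_of_lt ?_ hε
  rw [dist_eq_norm, ← (summable_smul hB₀ hx).tsum_sub (summable_smul hn hx)]
  refine tsum_of_norm_bounded
    ((hu.mul_left (B + B)).of_norm_bounded (norm_sub_mul_le hn)).hasSum fun k => ?_
  rw [← sub_smul, norm_smul]
  gcongr
  exact hg k x hx

theorem tendstoLocallyUniformlyOn_iteratedDeriv [NormedAddCommGroup E] [NormedSpace ℂ E]
    [CompleteSpace E] {l : Filter ι} {F : ι → ℂ → E} {f : ℂ → E} {U : Set ℂ}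
    (hU : IsOpen U) (hf : TendstoLocallyUniformlyOn F f l U)
    (hF : ∀ᶠ n in l, DifferentiableOn ℂ (F n) U) (j : ℕ) :
    TendstoLocallyUniformlyOn (fun n => iteratedDeriv j (F n)) (iteratedDeriv j f) l U := by
  induction j generalizing F f with
  | zero => simpa using hf
  | succ j ih =>
    simp only [iteratedDeriv_succ']
    exact ih (hf.deriv hF hU) (hF.mono fun n hn => hn.deriv hU)

theorem hasSum_coeff_smul_pow [CommSemiring R] {A β : Type*} [Semiring A] [Algebra R A]
    [TopologicalSpace A] (p : R[X]) (y : A) {e : β → ℕ} (he : Function.Injective e)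
    (hp : ∀ k ∉ Set.range e, p.coeff k = 0) :
    HasSum (fun i => p.coeff (e i) • y ^ e i) (aeval y p) := by
  refine (he.hasSum_iff (f := fun k => p.coeff k • y ^ k) fun k hk => by simp [hp k hk]).2 ?_
  rw [aeval_eq_sum_range]
  refine hasSum_sum_of_ne_finset_zero fun k hk => ?_
  rw [coeff_eq_zero_of_natDegree_lt (by simpa [Nat.lt_succ_iff] using hk), zero_smul]

theorem iteratedDeriv_const_mul_aeval_div [NontriviallyNormedField 𝕜] [CommSemiring R]
    [Algebra R 𝕜] (a c : 𝕜) (p : R[X]) (j : ℕ) :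
    iteratedDeriv j (fun x => a * aeval (x / c) p) =
      fun x => a / c ^ j * aeval (x / c) (derivative^[j] p) := by
  induction j generalizing a p with
  | zero => simp
  | succ j ih =>
    have deriv_eq : deriv (fun x => a * aeval (x / c) p) =
        fun x => a / c * aeval (x / c) (derivative p) := by
      funext x
      have h := ((p.hasDerivAt_aeval (x / c)).comp x ((hasDerivAt_id x).div_const c)).const_mul a
      refine h.deriv.trans ?_
      ring
    rw [iteratedDeriv_succ', deriv_eq, ih, pow_succ', ← div_div, Function.iterate_succ_apply]

theorem tendstoUniformlyOn_aeval_iterate_derivative [CommSemiring R] [Algebra R ℂ]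
    {l : Filter ι} {a c : ι → ℂ} {P : ι → R[X]} {f : ℂ → ℂ}
    (h : TendstoLocallyUniformly (fun n x => a n * aeval (x / c n) (P n)) f l) (j : ℕ)
    {K : Set ℂ} (hK : IsCompact K) :
    TendstoUniformlyOn (fun n x => a n / c n ^ j * aeval (x / c n) (derivative^[j] (P n)))
      (iteratedDeriv j f) l K := by
  have hdiff : ∀ᶠ n in l, DifferentiableOn ℂ (fun x => a n * aeval (x / c n) (P n)) Set.univ :=
    .of_forall fun n => ((P n).differentiable_aeval.comp
      (differentiable_id.div_const (c n))).const_mul (a n) |>.differentiableOn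
  have h' := tendstoLocallyUniformlyOn_iteratedDeriv isOpen_univ
    (tendstoLocallyUniformlyOn_univ.2 h) hdiff j
  simp only [iteratedDeriv_const_mul_aeval_div] at h'
  exact (tendstoLocallyUniformlyOn_iff_forall_isCompact isOpen_univ).1 h' K K.subset_univ hK

theorem factorial_two_mul (n : ℕ) : (2 * n)! = 2 ^ n * n ! * (2 * n - 1)‼ := by
  cases n with
  | zero => simp
  | succ n =>
    rw [← Nat.doubleFactorial_two_mul]
    exact Nat.factorial_eq_mul_doubleFactorial (2 * n + 1)

theorem centralBinom_div_four_pow [Field R] [CharZero R] (n : ℕ) :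
    (n.centralBinom : R) / 4 ^ n = (2 * n)! / (2 ^ (2 * n) * n ! * n !) := by
  rw [Nat.centralBinom_eq_two_mul_choose, two_mul, Nat.cast_add_choose, ← two_mul, pow_mul,
    show (2 : R) ^ 2 = 4 by norm_num]
  ring

theorem tendsto_sqrt_mul_centralBinom_div_four_pow :
    Tendsto (fun n : ℕ => √(n * π) * n.centralBinom / 4 ^ n) atTop (𝓝 1) := by
  have sq_eq (n : ℕ) : (√(n * π) * n.centralBinom / 4 ^ n) ^ 2 =
      π * (n / (2 * n + 1)) / Wallis.W n := by
    rw [mul_div_assoc, mul_pow, sq_sqrt (by positivity), Wallis.W_eq_factorial_ratio,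
      centralBinom_div_four_pow]
    field_simp
    ring
  have h := ((Stirling.tendsto_self_div_two_mul_self_add_one.const_mul π).div
    Wallis.tendsto_W_nhds_pi_div_two (by positivity)).sqrt
  rw [show π * (1 / 2) / (π / 2) = 1 by field_simp, sqrt_one] at h
  refine h.congr fun n => ?_
  rw [← sqrt_sq (show 0 ≤ √(n * π) * n.centralBinom / 4 ^ n by positivity), sq_eq]
  rfl

theorem tendsto_descFactorial_div_pow (k : ℕ) :
    Tendsto (fun n : ℕ => (n.descFactorial k : ℝ) / n ^ k) atTop (𝓝 1) := by
  refine (Asymptotics.isEquivalent_iff_tendsto_one ?_).1 (isEquivalent_descFactorial k)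
  filter_upwards [eventually_gt_atTop 0] with n hn
  positivity

theorem descFactorial_div_pow_le_one (n k : ℕ) : (n.descFactorial k : ℝ) / n ^ k ≤ 1 :=
  div_le_one_of_le₀ (mod_cast n.descFactorial_le_pow k) (by positivity)

theorem coeff_physHermite_succ_zero (n : ℕ) :
    (physHermite (n + 1)).coeff 0 = -(physHermite n).coeff 1 := by
  simp [physHermite, coeff_derivative, mul_assoc]

theorem coeff_physHermite_succ_succ (n k : ℕ) :
    (physHermite (n + 1)).coeff (k + 1) =
      2 * (physHermite n).coeff k - (k + 2) * (physHermite n).coeff (k + 2) := by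
  rw [physHermite, coeff_sub, mul_assoc, coeff_ofNat_mul, coeff_X_mul, coeff_derivative]
  push_cast
  ring

theorem coeff_physHermite_eq_coeff_hermite (n k : ℕ) :
    (physHermite n).coeff k = √2 ^ (n + k) * (hermite n).coeff k := by
  have sqrt_two_sq : √2 ^ 2 = 2 := sq_sqrt zero_le_two
  induction n generalizing k with
  | zero => cases k <;> simp [physHermite, coeff_one]
  | succ n ih =>
    cases k with
    | zero =>
      rw [coeff_physHermite_succ_zero, ih, coeff_hermite_succ_zero]
      push_cast
      ring
    | succ k =>
      rw [coeff_physHermite_succ_succ, ih, ih, coeff_hermite_succ_succ]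
      push_cast
      linear_combination -√2 ^ (n + k) * (hermite n).coeff k * sqrt_two_sq

theorem coeff_physHermite_of_lt {n k : ℕ} (h : n < k) : (physHermite n).coeff k = 0 := by
  rw [coeff_physHermite_eq_coeff_hermite, coeff_hermite_of_lt h, Int.cast_zero, mul_zero]

theorem coeff_physHermite_of_odd_add {n k : ℕ} (h : Odd (n + k)) :
    (physHermite n).coeff k = 0 := by
  rw [coeff_physHermite_eq_coeff_hermite, coeff_hermite_of_odd_add h, Int.cast_zero, mul_zero]

theorem coeff_physHermite_two_mul_add (m k : ℕ) :
    (physHermite (2 * m + k)).coeff k = (-1) ^ m * 2 ^ k * (2 * m + k)! / (m ! * k !) := by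
  have sqrt_two_pow : √2 ^ (2 * m + k + k) = 2 ^ m * 2 ^ k := by
    rw [show 2 * m + k + k = 2 * (m + k) by ring, pow_mul, sq_sqrt zero_le_two, pow_add]
  rw [coeff_physHermite_eq_coeff_hermite, coeff_hermite_explicit, sqrt_two_pow]
  push_cast
  rw [← Nat.choose_symm_add, Nat.cast_add_choose, factorial_two_mul]
  push_cast
  field_simp

theorem coeff_physHermite_div_pow {n : ℕ} (hn : n ≠ 0) (r i : ℕ) :
    (physHermite (2 * n + r)).coeff (2 * i + r) / (2 * √n) ^ (2 * i + r) =
      (-1) ^ n * (2 * n + r)! / (n ! * √n ^ r) * (n.descFactorial i / n ^ i) *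
        ((-1) ^ i / (2 * i + r)!) := by
  rcases lt_or_ge n i with hi | hi
  · rw [coeff_physHermite_of_lt (by lia), Nat.descFactorial_of_lt hi]
    simp
  obtain ⟨m, rfl⟩ := Nat.exists_eq_add_of_le' hi
  have descFactorial_eq : ((m + i).descFactorial i : ℝ) = (m + i)! / m ! := by
    rw [eq_div_iff (by positivity), mul_comm]
    exact_mod_cast Nat.add_sub_cancel (n := m) (m := i) ▸ Nat.factorial_mul_descFactorial hi
  have neg_one_pow : (-1 : ℝ) ^ (m + i) * (-1) ^ i = (-1) ^ m := by
    rw [pow_add, mul_assoc, ← mul_pow, neg_one_mul, neg_neg, one_pow, mul_one]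
  have scale_pow : (2 * √(m + i : ℕ)) ^ (2 * i + r) =
      2 ^ (2 * i + r) * (((m + i : ℕ) : ℝ) ^ i * √(m + i : ℕ) ^ r) := by
    rw [mul_pow, pow_add √_, pow_mul √_, sq_sqrt (Nat.cast_nonneg _)]
  have coeff_eq := coeff_physHermite_two_mul_add m (2 * i + r)
  rw [show 2 * m + (2 * i + r) = 2 * (m + i) + r by ring] at coeff_eq
  rw [coeff_eq, scale_pow, descFactorial_eq, ← neg_one_pow]
  field_simp

theorem hasSum_aeval_physHermite {n r : ℕ} (hn : n ≠ 0) (hr : r < 2) (x : ℂ) :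
    HasSum (fun i : ℕ => (((-1) ^ n * (2 * n + r)! / (n ! * √n ^ r) *
        (n.descFactorial i / n ^ i) : ℝ)) • ((-1) ^ i * x ^ (2 * i + r) / (2 * i + r)!))
      (aeval (x / (2 * √n)) (physHermite (2 * n + r))) := by
  have he : Function.Injective fun i => 2 * i + r := fun i j h => by simpa using h
  have coeff_eq_zero k (hk : k ∉ Set.range fun i => 2 * i + r) :
      (physHermite (2 * n + r)).coeff k = 0 := by
    refine coeff_physHermite_of_odd_add (Nat.not_even_iff_odd.1 ?_)
    rintro ⟨m, hm⟩
    exact hk ⟨m - n - r, by grind⟩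
  refine HasSum.congr_fun
    (hasSum_coeff_smul_pow (physHermite (2 * n + r)) (x / (2 * √n)) he coeff_eq_zero) fun i => ?_
  have h := congrArg Complex.ofReal (coeff_physHermite_div_pow hn r i)
  push_cast at h
  simp only [Complex.real_smul, div_pow]
  push_cast
  linear_combination -x ^ (2 * i + r) * h

theorem tendstoLocallyUniformly_physHermite {r : ℕ} (hr : r < 2) {a : ℕ → ℝ} {f : ℂ → ℂ}
    (ha : Tendsto (fun n => a n * ((-1) ^ n * (2 * n + r)! / (n ! * √n ^ r))) atTop (𝓝 1))
    (hf : ∀ x, HasSum (fun i : ℕ => (-1) ^ i * x ^ (2 * i + r) / ((2 * i + r)! : ℂ)) (f x)) :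
    TendstoLocallyUniformly
      (fun n (x : ℂ) => (a n : ℂ) * aeval (x / (2 * √n)) (physHermite (2 * n + r))) f atTop := by
  rw [tendstoLocallyUniformly_iff_forall_isCompact]
  intro K hK
  obtain ⟨ρ, hKρ⟩ := hK.isBounded.exists_norm_le
  have summable_majorant : Summable fun i : ℕ => ρ ^ (2 * i + r) / (2 * i + r)! :=
    (summable_pow_div_factorial ρ).comp_injective (i := fun i => 2 * i + r)
      fun i j h => by simpa using h
  have norm_term_le (i : ℕ) (x : ℂ) (hx : x ∈ K) :
      ‖(-1) ^ i * x ^ (2 * i + r) / ((2 * i + r)! : ℂ)‖ ≤ ρ ^ (2 * i + r) / (2 * i + r)! := by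
    simp only [norm_div, norm_mul, norm_pow, norm_neg, norm_one, one_pow, one_mul,
      Complex.norm_natCast]
    gcongr
    exact hKρ x hx
  set w : ℕ → ℝ := fun n => a n * ((-1) ^ n * (2 * n + r)! / (n ! * √n ^ r))
  have tendsto_weight (i : ℕ) :
      Tendsto (fun n => w n * (n.descFactorial i / n ^ i)) atTop (𝓝 1) := by
    simpa using ha.mul (tendsto_descFactorial_div_pow i)
  have norm_weight_le : ∀ᶠ n in atTop, ∀ i : ℕ, ‖w n * (n.descFactorial i / n ^ i)‖ ≤ 2 := by
    filter_upwards [ha.norm.eventually_le_const (by norm_num : ‖(1 : ℝ)‖ < 2)] with n hn i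
    rw [norm_mul, Real.norm_of_nonneg (by positivity : (0 : ℝ) ≤ n.descFactorial i / n ^ i)]
    exact (mul_le_of_le_one_right (norm_nonneg _) (descFactorial_div_pow_le_one n i)).trans hn
  have h :=
    tendstoUniformlyOn_tsum_smul summable_majorant norm_term_le tendsto_weight norm_weight_le
  refine (h.congr ?_).congr_right fun x _ => by simpa using (hf x).tsum_eq
  filter_upwards [eventually_ne_atTop 0] with n hn x _
  have hasSum_scaled := (hasSum_aeval_physHermite hn hr x).const_smul (a n)
  simp only [smul_smul, ← mul_assoc (a n)] at hasSum_scaled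
  simpa [w] using hasSum_scaled.tsum_eq

theorem tendstoLocallyUniformly_physHermite_two_mul :
    TendstoLocallyUniformly (fun (n : ℕ) (x : ℂ) =>
      (((-1) ^ n * √(n * π) / (2 ^ (2 * n) * n !) : ℝ) : ℂ) *
        aeval (x / (2 * √n)) (physHermite (2 * n))) Complex.cos atTop := by
  refine tendstoLocallyUniformly_physHermite zero_lt_two ?_ Complex.hasSum_cos
  refine tendsto_sqrt_mul_centralBinom_div_four_pow.congr fun n => ?_
  rw [mul_div_assoc, centralBinom_div_four_pow, pow_zero, mul_one, add_zero]
  field_simp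
  rw [← pow_mul', (even_two_mul n).neg_one_pow, mul_one]

theorem tendstoLocallyUniformly_physHermite_two_mul_add_one :
    TendstoLocallyUniformly (fun (n : ℕ) (x : ℂ) =>
      (((-1) ^ n * √π / (2 ^ (2 * n + 1) * n !) : ℝ) : ℂ) *
        aeval (x / (2 * √n)) (physHermite (2 * n + 1))) Complex.sin atTop := by
  refine tendstoLocallyUniformly_physHermite one_lt_two ?_ Complex.hasSum_sin
  have tendsto_ratio : Tendsto (fun n : ℕ => (n / (2 * n + 1) : ℝ)⁻¹ / 2) atTop (𝓝 1) := by
    convert (Stirling.tendsto_self_div_two_mul_self_add_one.inv₀ (by norm_num)).div_const 2 using 2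
    norm_num
  have h := tendsto_sqrt_mul_centralBinom_div_four_pow.mul tendsto_ratio
  rw [one_mul] at h
  refine h.congr' ?_
  filter_upwards [eventually_ne_atTop 0] with n hn
  rw [mul_div_assoc, centralBinom_div_four_pow, sqrt_mul n.cast_nonneg, Nat.factorial_succ]
  push_cast
  field_simp
  rw [← pow_mul', (even_two_mul n).neg_one_pow, sq_sqrt n.cast_nonneg]
  ring

end

/-- Eqs. (18)-(19): differentiated Mehler–Heine formulas. With
`a_{2n} = (-1)^n √(nπ)/(2^{2n} n!)` and `a_{2n+1} = (-1)^n √π/(2^{2n+1} n!)`,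
for every `j ≥ 0`, uniformly on compact subsets of `ℂ`,
`a_{2n}/(2√n)^j · H_{2n}^{(j)}(x/(2√n)) → (d/dx)^j cos x` and
`a_{2n+1}/(2√n)^j · H_{2n+1}^{(j)}(x/(2√n)) → (d/dx)^j sin x`. -/
theorem mehler_heine_derivatives
    (j : ℕ) (K : Set ℂ) (hK : IsCompact K) :
    TendstoUniformlyOn
      (fun (n : ℕ) (x : ℂ) =>
        ((((-1 : ℝ) ^ n * Real.sqrt (n * Real.pi) / (2 ^ (2 * n) * Nat.factorial n) /
            (2 * Real.sqrt n) ^ j : ℝ)) : ℂ) *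
          Polynomial.aeval (x / (2 * (Real.sqrt n : ℂ)))
            ((fun p => derivative p)^[j] (physHermite (2 * n))))
      (fun x : ℂ => iteratedDeriv j Complex.cos x) Filter.atTop K ∧
    TendstoUniformlyOn
      (fun (n : ℕ) (x : ℂ) =>
        ((((-1 : ℝ) ^ n * Real.sqrt Real.pi / (2 ^ (2 * n + 1) * Nat.factorial n) /
            (2 * Real.sqrt n) ^ j : ℝ)) : ℂ) *
          Polynomial.aeval (x / (2 * (Real.sqrt n : ℂ)))
            ((fun p => derivative p)^[j] (physHermite (2 * n + 1))))
      (fun x : ℂ => iteratedDeriv j Complex.sin x) Filter.atTop K := by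
  constructor
  · simpa using tendstoUniformlyOn_aeval_iterate_derivative
      tendstoLocallyUniformly_physHermite_two_mul j hK
  · simpa using tendstoUniformlyOn_aeval_iterate_derivative
      tendstoLocallyUniformly_physHermite_two_mul_add_one j hK
end
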